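/- The algebra (ℬ, ⋆) is free on the set 𝔾 of nonempty indivisible B-diagrams: the unique unital ℂ-algebra morphism from the free associative ℂ-algebra on the set 𝔾 to (ℬ, ⋆) sending each generator to the corresponding basis element of ℬ is an isomorphism of algebras. -/

import Mathlib

open scoped BigOperators

structure BD where
  lam : List ℕ
  up : Finset ℕ
  dn : Finset ℕ
  ed : Finset (ℕ × ℕ)
deriving DecidableEq

namespace BD

/-- number of vertices -/
def nv (G : BD) : ℕ := G.lam.length

/-- number of half-edges -/
def omega (G : BD) : ℕ := G.lam.sum

/-- the vertex to which a half-edge belongs -/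
def v (G : BD) (k : ℕ) : ℕ :=
  (List.range G.lam.length).countP (fun i => (G.lam.take i).sum < k)

def Valid (G : BD) : Prop :=
  (∀ x ∈ G.lam, 0 < x) ∧
  G.up ⊆ Finset.Icc 1 G.omega ∧
  G.dn ⊆ Finset.Icc 1 G.omega ∧
  (∀ p ∈ G.ed, p.1 ∈ G.up ∧ p.2 ∈ G.dn ∧ G.v p.1 < G.v p.2) ∧
  (∀ p ∈ G.ed, ∀ q ∈ G.ed, p.1 = q.1 → p = q) ∧
  (∀ p ∈ G.ed, ∀ q ∈ G.ed, p.2 = q.2 → p = q)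

def eps : BD := ⟨[], ∅, ∅, ∅⟩

theorem eps_valid : eps.Valid := by
  refine ⟨?_, ?_, ?_, ?_, ?_, ?_⟩ <;> simp [eps, Valid, omega]

def HfUp (G : BD) : Finset ℕ := G.up \ G.ed.image Prod.fst
def HfDn (G : BD) : Finset ℕ := G.dn \ G.ed.image Prod.snd
def hfUp (G : BD) : ℕ := G.HfUp.card
def hfDn (G : BD) : ℕ := G.HfDn.card
def hc (G : BD) : ℕ :=
  (G.omega - G.ed.card - G.hfUp) + (G.omega - G.ed.card - G.hfDn)

/-- composition of `G'` over `G` along a matching `s` -/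
def comp (G G' : BD) (s : Finset (ℕ × ℕ)) : BD where
  lam := G.lam ++ G'.lam
  up := G.up ∪ G'.up.image (· + G.omega)
  dn := G.dn ∪ G'.dn.image (· + G.omega)
  ed := G.ed ∪ s.image (fun p => (p.1, p.2 + G.omega)) ∪
        G'.ed.image (fun p => (p.1 + G.omega, p.2 + G.omega))

/-- `s` encodes a strictly increasing sequence `a₁ < ⋯ < a_k` of elements of `H_f↑(G)`
matched with pairwise distinct elements `b₁,…,b_k` of `H_f↓(G')`. -/
def Matching (G G' : BD) (s : Finset (ℕ × ℕ)) : Prop :=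
  (∀ p ∈ s, p.1 ∈ G.HfUp ∧ p.2 ∈ G'.HfDn) ∧
  (∀ p ∈ s, ∀ q ∈ s, p.1 = q.1 → p = q) ∧
  (∀ p ∈ s, ∀ q ∈ s, p.2 = q.2 → p = q)

open scoped Classical in
noncomputable def matchings (G G' : BD) : Finset (Finset (ℕ × ℕ)) :=
  (G.HfUp ×ˢ G'.HfDn).powerset.filter (fun s => Matching G G' s)

/-- juxtaposition -/
def juxt (G G' : BD) : BD := comp G G' ∅

def Indiv (G : BD) : Prop :=
  ∀ G₁ G₂ : BD, G₁.Valid → G₂.Valid → G = juxt G₁ G₂ → G₁ = G ∨ G₂ = G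

/-- half-edges attached to the vertices in `I` -/
def HI (G : BD) (I : Finset ℕ) : Finset ℕ :=
  (Finset.Icc 1 G.omega).filter (fun k => G.v k ∈ I)

/-- the increasing relabelling bijection -/
def phi (G : BD) (I : Finset ℕ) (k : ℕ) : ℕ := ((G.HI I).filter (· ≤ k)).card

/-- sub-B-diagram on the set of vertices `I` -/
def sub (G : BD) (I : Finset ℕ) : BD where
  lam := ((List.range G.lam.length).filter (fun i => i + 1 ∈ I)).map (fun i => G.lam.getD i 0)
  up := (G.up ∩ G.HI I).image (G.phi I)
  dn := (G.dn ∩ G.HI I).image (G.phi I)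
  ed := (G.ed.filter (fun p => G.v p.1 ∈ I ∧ G.v p.2 ∈ I)).image
          (fun p => (G.phi I p.1, G.phi I p.2))

def Isolated (G : BD) (I : Finset ℕ) : Prop :=
  ∀ p ∈ G.ed, (G.v p.1 ∈ I ↔ G.v p.2 ∈ I)

def Connected (G : BD) : Prop :=
  ∀ i j : ℕ, 1 ≤ i → i < j → j ≤ G.nv →
    ∃ (k : ℕ) (c : Fin (k + 1) → ℕ × ℕ),
      (∀ ℓ, c ℓ ∈ G.ed) ∧
      (i = G.v (c 0).1 ∨ i = G.v (c 0).2) ∧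
      (j = G.v (c (Fin.last k)).1 ∨ j = G.v (c (Fin.last k)).2) ∧
      ∀ ℓ : Fin k,
        G.v (c ℓ.castSucc).1 = G.v (c ℓ.succ).1 ∨ G.v (c ℓ.castSucc).1 = G.v (c ℓ.succ).2 ∨
        G.v (c ℓ.castSucc).2 = G.v (c ℓ.succ).1 ∨ G.v (c ℓ.castSucc).2 = G.v (c ℓ.succ).2

def IsConnComp (G : BD) (I : Finset ℕ) : Prop :=
  I ⊆ Finset.Icc 1 G.nv ∧ I.Nonempty ∧ (G.sub I).Connected ∧
  ∀ J : Finset ℕ, I ⊆ J → J ⊆ Finset.Icc 1 G.nv → (G.sub J).Connected → J = I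

end BD

open scoped TensorProduct

/-- B-diagrams -/
abbrev BDiagram := {G : BD // G.Valid}

/-- the free `ℂ`-vector space on the set of B-diagrams -/
abbrev BSpace := BDiagram →₀ ℂ

open scoped Classical in
noncomputable def mkB (G : BD) : BSpace :=
  if h : G.Valid then Finsupp.single ⟨G, h⟩ 1 else 0

noncomputable def unitB : BSpace := Finsupp.single ⟨BD.eps, BD.eps_valid⟩ 1

noncomputable def liftB {V : Type*} [AddCommMonoid V] [Module ℂ V] (f : BDiagram → V) :
    BSpace →ₗ[ℂ] V :=
  Finsupp.lsum ℂ fun A => LinearMap.toSpanSingleton ℂ V (f A)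

noncomputable def mulfun (A B : BDiagram) : BSpace :=
  ∑ s ∈ BD.matchings A.1 B.1, mkB (BD.comp A.1 B.1 s)

/-- the product ⋆ of the algebra of B-diagrams, as a bilinear map -/
noncomputable def starB : BSpace →ₗ[ℂ] BSpace →ₗ[ℂ] BSpace :=
  liftB fun A => liftB fun B => mulfun A B

open scoped Classical in
/-- the coproduct evaluated on a B-diagram -/
noncomputable def dfun (A : BDiagram) : BSpace ⊗[ℂ] BSpace :=
  ∑ I ∈ (Finset.Icc 1 A.1.nv).powerset.filter (fun I => A.1.Isolated I),
    mkB (A.1.sub I) ⊗ₜ[ℂ] mkB (A.1.sub (Finset.Icc 1 A.1.nv \ I))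

/-- the coproduct Δ of ℬ -/
noncomputable def deltaL : BSpace →ₗ[ℂ] BSpace ⊗[ℂ] BSpace := liftB dfun

/-- the counit of ℬ -/
noncomputable def counitB : BSpace →ₗ[ℂ] ℂ :=
  liftB fun A => if A.1 = BD.eps then (1 : ℂ) else 0

/-- the set 𝔾 of nonempty indivisible B-diagrams -/
abbrev GSet := {A : BDiagram // A.1 ≠ BD.eps ∧ A.1.Indiv}

/-- product in ℬ of a word of indivisible B-diagrams -/
noncomputable def wordProdB (l : List GSet) : BSpace :=
  (l.map fun g => (Finsupp.single g.1 1 : BSpace)).foldr (fun x acc => starB x acc) unitB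

/-- the linear extension of `wordProdB`, i.e. the unique unital algebra morphism from
the free associative algebra on 𝔾 (realized as the vector space with basis the words
over 𝔾) to `(ℬ, ⋆)` sending each generator to the corresponding B-diagram. -/
noncomputable def PsiB : (List GSet →₀ ℂ) →ₗ[ℂ] BSpace :=
  Finsupp.lsum ℂ fun w => LinearMap.toSpanSingleton ℂ BSpace (wordProdB w)

namespace BD

theorem bd_ext {A B : BD} (h1 : A.lam = B.lam) (h2 : ∀ k, k ∈ A.up ↔ k ∈ B.up)
    (h3 : ∀ k, k ∈ A.dn ↔ k ∈ B.dn) (h4 : ∀ a b, (a, b) ∈ A.ed ↔ (a, b) ∈ B.ed) : A = B := by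
  cases A; cases B
  simp only [BD.mk.injEq]
  refine ⟨h1, Finset.ext h2, Finset.ext h3, Finset.ext ?_⟩
  rintro ⟨a, b⟩; exact h4 a b

def vl (l : List ℕ) (k : ℕ) : ℕ :=
  (List.range l.length).countP (fun i => (l.take i).sum < k)

theorem vl_nil (k : ℕ) : vl [] k = 0 := by simp [vl]

theorem vl_cons (x : ℕ) (l : List ℕ) (k : ℕ) :
    vl (x :: l) k = (if 0 < k then 1 else 0) + vl l (k - x) := by
  unfold vl
  rw [List.length_cons, List.range_succ_eq_map, List.countP_cons, List.countP_map, add_comm]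
  congr 1
  · simp only [List.take_zero, List.sum_nil]
    by_cases h : 0 < k <;> simp [h]
  · apply List.countP_congr
    intro i _
    simp only [Function.comp, List.take_succ_cons, List.sum_cons]
    refine decide_eq_true_iff.trans (Iff.trans ?_ decide_eq_true_iff.symm)
    omega

theorem vl_zero (l : List ℕ) : vl l 0 = 0 := by simp [vl]

theorem vl_append (l1 l2 : List ℕ) (k : ℕ) :
    vl (l1 ++ l2) k = vl l1 k + vl l2 (k - l1.sum) := by
  induction l1 generalizing k with
  | nil => simp [vl_nil]
  | cons x l ih =>
    rw [List.cons_append, vl_cons, vl_cons, ih, List.sum_cons, Nat.sub_sub, add_assoc]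

theorem vl_le (l : List ℕ) (k : ℕ) : vl l k ≤ l.length := by
  unfold vl
  exact List.countP_le_length.trans (by simp)

theorem vl_mono (l : List ℕ) {a b : ℕ} (h : a ≤ b) : vl l a ≤ vl l b := by
  unfold vl
  apply List.countP_mono_left
  intro x _
  simp
  omega

theorem vl_top (l : List ℕ) (k : ℕ) (h : l.sum < k) : vl l k = l.length := by
  induction l generalizing k with
  | nil => simp [vl_nil]
  | cons x l ih =>
    rw [List.sum_cons] at h
    rw [vl_cons, ih _ (by omega), if_pos (by omega), List.length_cons, add_comm]

theorem vl_pos (l : List ℕ) (k : ℕ) (h : 0 < k) (hl : l ≠ []) : 0 < vl l k := by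
  cases l with
  | nil => simp at hl
  | cons x l => rw [vl_cons, if_pos h]; omega

structure Cut (G A B : BD) : Prop where
  lam : G.lam = A.lam ++ B.lam
  upl : ∀ k, k ≤ A.lam.sum → (k ∈ G.up ↔ k ∈ A.up)
  upr : ∀ k, 1 ≤ k → (k + A.lam.sum ∈ G.up ↔ k ∈ B.up)
  dnl : ∀ k, k ≤ A.lam.sum → (k ∈ G.dn ↔ k ∈ A.dn)
  dnr : ∀ k, 1 ≤ k → (k + A.lam.sum ∈ G.dn ↔ k ∈ B.dn)
  edl : ∀ a b, a ≤ A.lam.sum → b ≤ A.lam.sum → ((a, b) ∈ G.ed ↔ (a, b) ∈ A.ed)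
  edr : ∀ a b, 1 ≤ a → 1 ≤ b → ((a + A.lam.sum, b + A.lam.sum) ∈ G.ed ↔ (a, b) ∈ B.ed)

/-- unpacked validity -/
structure V (G : BD) : Prop where
  pos : ∀ x ∈ G.lam, 0 < x
  up : ∀ k ∈ G.up, 1 ≤ k ∧ k ≤ G.lam.sum
  dn : ∀ k ∈ G.dn, 1 ≤ k ∧ k ≤ G.lam.sum
  ed : ∀ a b, (a, b) ∈ G.ed → a ∈ G.up ∧ b ∈ G.dn ∧ vl G.lam a < vl G.lam b
  inj1 : ∀ a b c, (a, b) ∈ G.ed → (a, c) ∈ G.ed → b = c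
  inj2 : ∀ a b c, (a, c) ∈ G.ed → (b, c) ∈ G.ed → a = b

theorem valid_iff (G : BD) : G.Valid ↔ G.V := by
  constructor
  · rintro ⟨h1, h2, h3, h4, h5, h6⟩
    refine ⟨h1, fun k hk => Finset.mem_Icc.1 (h2 hk), fun k hk => Finset.mem_Icc.1 (h3 hk),
      fun a b h => h4 _ h, fun a b c h h' => ?_, fun a b c h h' => ?_⟩
    · simpa using h5 _ h _ h' rfl
    · simpa using h6 _ h _ h' rfl
  · rintro ⟨h1, h2, h3, h4, h5, h6⟩
    refine ⟨h1, fun k hk => Finset.mem_Icc.2 (h2 k hk), fun k hk => Finset.mem_Icc.2 (h3 k hk),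
      fun p h => h4 _ _ h, ?_, ?_⟩
    · rintro ⟨a, b⟩ h ⟨c, d⟩ h' rfl
      rw [h5 _ _ _ h h']
    · rintro ⟨a, b⟩ h ⟨c, d⟩ h' rfl
      rw [h6 _ _ _ h h']

theorem V.edlt {G : BD} (h : G.V) {a b : ℕ} (hab : (a, b) ∈ G.ed) : a < b := by
  by_contra hc
  have := vl_mono G.lam (Nat.le_of_not_lt hc)
  have := (h.ed a b hab).2.2
  omega

theorem V.edb {G : BD} (h : G.V) {a b : ℕ} (hab : (a, b) ∈ G.ed) :
    1 ≤ a ∧ a < b ∧ b ≤ G.lam.sum :=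
  ⟨(h.up _ (h.ed a b hab).1).1, h.edlt hab, (h.dn _ (h.ed a b hab).2.1).2⟩

theorem vl_app_l (l1 l2 : List ℕ) {k : ℕ} (h : k ≤ l1.sum) : vl (l1 ++ l2) k = vl l1 k := by
  rw [vl_append, Nat.sub_eq_zero_of_le h, vl_zero, add_zero]

theorem vl_app_r (l1 l2 : List ℕ) {k : ℕ} (h : 1 ≤ k) :
    vl (l1 ++ l2) (k + l1.sum) = l1.length + vl l2 k := by
  rw [vl_append, vl_top _ _ (by omega), Nat.add_sub_cancel]

/-- restrictions -/
def L (G : BD) (l1 : List ℕ) : BD :=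
  ⟨l1, G.up.filter (· ≤ l1.sum), G.dn.filter (· ≤ l1.sum),
    G.ed.filter (fun p => p.1 ≤ l1.sum ∧ p.2 ≤ l1.sum)⟩

def R (G : BD) (l1 l2 : List ℕ) : BD :=
  ⟨l2, (Finset.Icc 1 l2.sum).filter (· + l1.sum ∈ G.up),
    (Finset.Icc 1 l2.sum).filter (· + l1.sum ∈ G.dn),
    (Finset.Icc 1 l2.sum ×ˢ Finset.Icc 1 l2.sum).filter
      (fun p => (p.1 + l1.sum, p.2 + l1.sum) ∈ G.ed)⟩

theorem L_valid {G : BD} (hG : G.V) {l1 l2 : List ℕ} (h : G.lam = l1 ++ l2) : (L G l1).V := by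
  have hs : G.lam.sum = l1.sum + l2.sum := by rw [h, List.sum_append]
  refine ⟨?_, ?_, ?_, ?_, ?_, ?_⟩
  · intro x hx; exact hG.pos x (by rw [h]; exact List.mem_append_left _ hx)
  · intro k hk
    simp only [L, Finset.mem_filter] at hk
    exact ⟨(hG.up k hk.1).1, hk.2⟩
  · intro k hk
    simp only [L, Finset.mem_filter] at hk
    exact ⟨(hG.dn k hk.1).1, hk.2⟩
  · intro a b hab
    simp only [L, Finset.mem_filter] at hab ⊢
    have := hG.ed a b hab.1
    rw [h, vl_app_l _ _ hab.2.1, vl_app_l _ _ hab.2.2] at this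
    exact ⟨⟨this.1, hab.2.1⟩, ⟨this.2.1, hab.2.2⟩, this.2.2⟩
  · intro a b c h1 h2
    simp only [L, Finset.mem_filter] at h1 h2
    exact hG.inj1 _ _ _ h1.1 h2.1
  · intro a b c h1 h2
    simp only [L, Finset.mem_filter] at h1 h2
    exact hG.inj2 _ _ _ h1.1 h2.1

theorem R_valid {G : BD} (hG : G.V) {l1 l2 : List ℕ} (h : G.lam = l1 ++ l2) : (R G l1 l2).V := by
  have hs : G.lam.sum = l1.sum + l2.sum := by rw [h, List.sum_append]
  refine ⟨?_, ?_, ?_, ?_, ?_, ?_⟩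
  · intro x hx; exact hG.pos x (by rw [h]; exact List.mem_append_right _ hx)
  · intro k hk
    simp only [R, Finset.mem_filter, Finset.mem_Icc] at hk
    exact hk.1
  · intro k hk
    simp only [R, Finset.mem_filter, Finset.mem_Icc] at hk
    exact hk.1
  · intro a b hab
    simp only [R, Finset.mem_filter, Finset.mem_Icc, Finset.mem_product] at hab ⊢
    have := hG.ed _ _ hab.2
    rw [h, vl_app_r _ _ hab.1.1.1, vl_app_r _ _ hab.1.2.1] at this
    exact ⟨⟨hab.1.1, this.1⟩, ⟨hab.1.2, this.2.1⟩, by omega⟩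
  · intro a b c h1 h2
    simp only [R, Finset.mem_filter] at h1 h2
    have := hG.inj1 _ _ _ h1.2 h2.2
    omega
  · intro a b c h1 h2
    simp only [R, Finset.mem_filter] at h1 h2
    have := hG.inj2 _ _ _ h1.2 h2.2
    omega

theorem Cut_LR {G : BD} (hG : G.V) {l1 l2 : List ℕ} (h : G.lam = l1 ++ l2) :
    Cut G (L G l1) (R G l1 l2) := by
  have hs : G.lam.sum = l1.sum + l2.sum := by rw [h, List.sum_append]
  refine ⟨h, ?_, ?_, ?_, ?_, ?_, ?_⟩
  · intro k hk
    simp only [L, Finset.mem_filter] at hk ⊢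
    tauto
  · intro k hk
    simp only [L, R, Finset.mem_filter, Finset.mem_Icc]
    refine ⟨fun h' => ⟨⟨hk, ?_⟩, h'⟩, fun h' => h'.2⟩
    have := (hG.up _ h').2
    omega
  · intro k hk
    simp only [L, Finset.mem_filter] at hk ⊢
    tauto
  · intro k hk
    simp only [L, R, Finset.mem_filter, Finset.mem_Icc]
    refine ⟨fun h' => ⟨⟨hk, ?_⟩, h'⟩, fun h' => h'.2⟩
    have := (hG.dn _ h').2
    omega
  · intro a b ha hb
    simp only [L, Finset.mem_filter] at ha hb ⊢
    tauto
  · intro a b ha hb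
    simp only [L, R, Finset.mem_filter, Finset.mem_Icc, Finset.mem_product]
    refine ⟨fun h' => ⟨⟨⟨ha, ?_⟩, hb, ?_⟩, h'⟩, fun h' => h'.2⟩ <;>
    · have := (hG.edb h')
      omega

theorem Cut.unique {G A B A' B' : BD} (h : Cut G A B) (h' : Cut G A' B') (hA : A.V) (hB : B.V)
    (hA' : A'.V) (hB' : B'.V) (hl : A.lam = A'.lam) : A = A' ∧ B = B' := by
  have hl2 : B.lam = B'.lam := by
    have := h.lam.symm.trans h'.lam
    rw [hl] at this
    exact List.append_cancel_left this
  have hs : A.lam.sum = A'.lam.sum := by rw [hl]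
  obtain ⟨_, a1, a2, a3, a4, a5, a6⟩ := h
  obtain ⟨_, b1, b2, b3, b4, b5, b6⟩ := h'
  rw [← hs] at b1 b2 b3 b4 b5 b6
  constructor
  · apply bd_ext hl
    · intro k
      have := hA.up k; have := hA'.up k; have := a1 k; have := b1 k
      by_cases hk : k ≤ A.lam.sum
      · tauto
      · constructor <;> intro h <;> exfalso <;> grind
    · intro k
      have := hA.dn k; have := hA'.dn k; have := a3 k; have := b3 k
      by_cases hk : k ≤ A.lam.sum
      · tauto
      · constructor <;> intro h <;> exfalso <;> grind
    · intro a b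
      have := @V.edb _ hA a b; have := @V.edb _ hA' a b; have := a5 a b; have := b5 a b
      constructor <;> intro h <;> grind
  · apply bd_ext hl2
    · intro k
      have := hB.up k; have := hB'.up k; have := a2 k; have := b2 k
      constructor <;> intro h <;> grind
    · intro k
      have := hB.dn k; have := hB'.dn k; have := a4 k; have := b4 k
      constructor <;> intro h <;> grind
    · intro a b
      have := @V.edb _ hB a b; have := @V.edb _ hB' a b; have := a6 a b; have := b6 a b
      constructor <;> intro h <;> grind

theorem V.up0 {G : BD} (hG : G.V) : 0 ∉ G.up := fun h => by have := hG.up 0 h; omega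
theorem V.dn0 {G : BD} (hG : G.V) : 0 ∉ G.dn := fun h => by have := hG.dn 0 h; omega
theorem V.ed0l {G : BD} (hG : G.V) (b : ℕ) : (0, b) ∉ G.ed := fun h => by
  have := hG.edb h; omega
theorem V.ed0r {G : BD} (hG : G.V) (a : ℕ) : (a, 0) ∉ G.ed := fun h => by
  have := hG.edb h; omega

theorem cut_assoc {G D A B C : BD} (hG : G.V) (hB : B.V) (h1 : Cut D A B) (h2 : Cut G D C) :
    Cut G A (R G A.lam (B.lam ++ C.lam)) ∧ Cut (R G A.lam (B.lam ++ C.lam)) B C := by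
  have hl : G.lam = A.lam ++ (B.lam ++ C.lam) := by rw [h2.lam, h1.lam, List.append_assoc]
  have hc := Cut_LR hG hl
  have hEV := R_valid hG hl
  have hD : D.lam.sum = B.lam.sum + A.lam.sum := by rw [h1.lam, List.sum_append, add_comm]
  obtain ⟨_, a1, a2, a3, a4, a5, a6⟩ := h1
  obtain ⟨_, b1, b2, b3, b4, b5, b6⟩ := h2
  obtain ⟨_, c1, c2, c3, c4, c5, c6⟩ := hc
  set E := R G A.lam (B.lam ++ C.lam) with hE
  have hEl : E.lam = B.lam ++ C.lam := rfl
  have hLl : (L G A.lam).lam = A.lam := rfl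
  rw [hLl] at c1 c2 c3 c4 c5 c6
  rw [hD] at b1 b2 b3 b4 b5 b6
  refine ⟨⟨hl, ?_, c2, ?_, c4, ?_, c6⟩, ⟨hEl, ?_, ?_, ?_, ?_, ?_, ?_⟩⟩
  · intro k hk; rw [b1 k (by omega), a1 k hk]
  · intro k hk; rw [b3 k (by omega), a3 k hk]
  · intro a b ha hb; rw [b5 a b (by omega) (by omega), a5 a b ha hb]
  · intro k hk
    rcases Nat.eq_zero_or_pos k with rfl | h0
    · simp [hEV.up0, hB.up0]
    · rw [← c2 k h0, b1 _ (by omega), a2 k h0]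
  · intro k hk
    rw [← c2 _ (by omega), add_assoc, b2 k hk]
  · intro k hk
    rcases Nat.eq_zero_or_pos k with rfl | h0
    · simp [hEV.dn0, hB.dn0]
    · rw [← c4 k h0, b3 _ (by omega), a4 k h0]
  · intro k hk
    rw [← c4 _ (by omega), add_assoc, b4 k hk]
  · intro a b ha hb
    rcases Nat.eq_zero_or_pos a with rfl | h0
    · simp [hEV.ed0l, hB.ed0l]
    rcases Nat.eq_zero_or_pos b with rfl | h0'
    · simp [hEV.ed0r, hB.ed0r]
    rw [← c6 a b h0 h0', b5 _ _ (by omega) (by omega), a6 a b h0 h0']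
  · intro a b ha hb
    rw [← c6 _ _ (by omega) (by omega), add_assoc, add_assoc, b6 a b ha hb]

theorem cut_assoc' {G E A B C : BD} (hG : G.V) (hB : B.V) (h1 : Cut G A E) (h2 : Cut E B C) :
    Cut G (L G (A.lam ++ B.lam)) C ∧ Cut (L G (A.lam ++ B.lam)) A B := by
  have hl : G.lam = (A.lam ++ B.lam) ++ C.lam := by rw [h1.lam, h2.lam, List.append_assoc]
  have hc := Cut_LR hG hl
  obtain ⟨_, a1, a2, a3, a4, a5, a6⟩ := h1
  obtain ⟨_, b1, b2, b3, b4, b5, b6⟩ := h2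
  obtain ⟨_, c1, c2, c3, c4, c5, c6⟩ := hc
  set D := L G (A.lam ++ B.lam) with hE
  have hDl : D.lam = A.lam ++ B.lam := rfl
  have hD : D.lam.sum = B.lam.sum + A.lam.sum := by rw [hDl, List.sum_append, add_comm]
  rw [hD] at c1 c2 c3 c4 c5 c6
  have hDV : D.V := L_valid hG hl
  refine ⟨⟨hl, ?_, ?_, ?_, ?_, ?_, ?_⟩, ⟨hDl, ?_, ?_, ?_, ?_, ?_, ?_⟩⟩
  · rwa [hD]
  · intro k hk; rw [hD, ← add_assoc, a2 _ (by omega), b2 _ hk]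
  · rwa [hD]
  · intro k hk; rw [hD, ← add_assoc, a4 _ (by omega), b4 _ hk]
  · rwa [hD]
  · intro a b ha hb
    rw [hD, ← add_assoc, ← add_assoc, a6 _ _ (by omega) (by omega), b6 _ _ ha hb]
  · intro k hk; rw [← c1 k (by omega), a1 k hk]
  · intro k hk
    by_cases h : k ≤ B.lam.sum
    · rw [← c1 _ (by omega), a2 _ hk, b1 _ h]
    · exact iff_of_false (fun h' => by have := hDV.up _ h'; omega)
        (fun h' => by have := hB.up _ h'; omega)
  · intro k hk; rw [← c3 k (by omega), a3 k hk]
  · intro k hk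
    by_cases h : k ≤ B.lam.sum
    · rw [← c3 _ (by omega), a4 _ hk, b3 _ h]
    · exact iff_of_false (fun h' => by have := hDV.dn _ h'; omega)
        (fun h' => by have := hB.dn _ h'; omega)
  · intro a b ha hb; rw [← c5 a b (by omega) (by omega), a5 a b ha hb]
  · intro a b ha hb
    by_cases h : a ≤ B.lam.sum ∧ b ≤ B.lam.sum
    · rw [← c5 _ _ (by omega) (by omega), a6 _ _ ha hb, b5 _ _ h.1 h.2]
    · exact iff_of_false (fun h' => by have := hDV.edb h'; omega)
        (fun h' => by have := hB.edb h'; omega)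

theorem comp_mem_up {A B : BD} {s : Finset (ℕ × ℕ)} {k : ℕ} :
    k ∈ (comp A B s).up ↔ k ∈ A.up ∨ ∃ j ∈ B.up, j + A.lam.sum = k := by
  simp [comp, omega]

theorem comp_mem_dn {A B : BD} {s : Finset (ℕ × ℕ)} {k : ℕ} :
    k ∈ (comp A B s).dn ↔ k ∈ A.dn ∨ ∃ j ∈ B.dn, j + A.lam.sum = k := by
  simp [comp, omega]

theorem comp_mem_ed {A B : BD} {s : Finset (ℕ × ℕ)} {a b : ℕ} :
    (a, b) ∈ (comp A B s).ed ↔ (a, b) ∈ A.ed ∨ (∃ b', (a, b') ∈ s ∧ b' + A.lam.sum = b) ∨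
      ∃ a' b', (a', b') ∈ B.ed ∧ a' + A.lam.sum = a ∧ b' + A.lam.sum = b := by
  simp [comp, omega]

theorem mem_HfUp {A : BD} {k : ℕ} : k ∈ A.HfUp ↔ k ∈ A.up ∧ ∀ b, (k, b) ∉ A.ed := by
  simp [HfUp]

theorem mem_HfDn {A : BD} {k : ℕ} : k ∈ A.HfDn ↔ k ∈ A.dn ∧ ∀ b, (b, k) ∉ A.ed := by
  simp [HfDn]

structure M (A B : BD) (s : Finset (ℕ × ℕ)) : Prop where
  up : ∀ a b, (a, b) ∈ s → a ∈ A.up ∧ (∀ c, (a, c) ∉ A.ed) ∧ 1 ≤ a ∧ a ≤ A.lam.sum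
  dn : ∀ a b, (a, b) ∈ s → b ∈ B.dn ∧ (∀ c, (c, b) ∉ B.ed) ∧ 1 ≤ b ∧ b ≤ B.lam.sum
  inj1 : ∀ a b c, (a, b) ∈ s → (a, c) ∈ s → b = c
  inj2 : ∀ a b c, (a, c) ∈ s → (b, c) ∈ s → a = b

theorem matching_iff {A B : BD} (hA : A.V) (hB : B.V) {s : Finset (ℕ × ℕ)} :
    s ∈ matchings A B ↔ M A B s := by
  have key : s ∈ matchings A B ↔ Matching A B s := by
    simp only [matchings, Finset.mem_filter, Finset.mem_powerset]
    refine ⟨fun h => h.2, fun h => ⟨fun p hp => ?_, h⟩⟩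
    exact Finset.mem_product.2 (h.1 p hp)
  rw [key]
  constructor
  · rintro ⟨h1, h2, h3⟩
    refine ⟨fun a b h => ?_, fun a b h => ?_, fun a b c h h' => ?_, fun a b c h h' => ?_⟩
    · have := mem_HfUp.1 (h1 _ h).1
      exact ⟨this.1, this.2, hA.up _ this.1⟩
    · have := mem_HfDn.1 (h1 _ h).2
      exact ⟨this.1, this.2, hB.dn _ this.1⟩
    · simpa using h2 _ h _ h' rfl
    · simpa using h3 _ h _ h' rfl
  · rintro ⟨h1, h2, h3, h4⟩
    refine ⟨?_, ?_, ?_⟩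
    · rintro ⟨a, b⟩ h
      exact ⟨mem_HfUp.2 ⟨(h1 a b h).1, (h1 a b h).2.1⟩, mem_HfDn.2 ⟨(h2 a b h).1, (h2 a b h).2.1⟩⟩
    · rintro ⟨a, b⟩ h ⟨c, d⟩ h' rfl
      rw [h3 _ _ _ h h']
    · rintro ⟨a, b⟩ h ⟨c, d⟩ h' rfl
      rw [h4 _ _ _ h h']

theorem comp_valid {A B : BD} (hA : A.V) (hB : B.V) {s : Finset (ℕ × ℕ)} (hs : M A B s) :
    (comp A B s).V := by
  have hl : (comp A B s).lam = A.lam ++ B.lam := rfl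
  refine ⟨?_, ?_, ?_, ?_, ?_, ?_⟩
  · intro x hx
    rw [hl, List.mem_append] at hx
    exact hx.elim (hA.pos x) (hB.pos x)
  · intro k hk
    rw [hl, List.sum_append]
    rcases comp_mem_up.1 hk with h | ⟨j, h, rfl⟩
    · have := hA.up _ h; omega
    · have := hB.up _ h; omega
  · intro k hk
    rw [hl, List.sum_append]
    rcases comp_mem_dn.1 hk with h | ⟨j, h, rfl⟩
    · have := hA.dn _ h; omega
    · have := hB.dn _ h; omega
  · intro a b hab
    rw [comp_mem_up, comp_mem_dn, hl]
    rcases comp_mem_ed.1 hab with h | ⟨b', h, rfl⟩ | ⟨a', b', h, rfl, rfl⟩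
    · have h1 := hA.ed _ _ h
      have h2 := hA.edb h
      refine ⟨Or.inl h1.1, Or.inl h1.2.1, ?_⟩
      rw [vl_app_l _ _ (by omega), vl_app_l _ _ (by omega)]
      exact h1.2.2
    · have h1 := hs.up _ _ h
      have h2 := hs.dn _ _ h
      refine ⟨Or.inl h1.1, Or.inr ⟨_, h2.1, rfl⟩, ?_⟩
      rw [vl_app_l _ _ (by omega), vl_app_r _ _ (by omega)]
      have := vl_le A.lam a
      have := vl_pos B.lam b' (by omega) (by rintro h0; rw [h0] at h2; simp at h2; omega)
      omega
    · have h1 := hB.ed _ _ h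
      have h2 := hB.edb h
      refine ⟨Or.inr ⟨_, h1.1, rfl⟩, Or.inr ⟨_, h1.2.1, rfl⟩, ?_⟩
      rw [vl_app_r _ _ (by omega), vl_app_r _ _ (by omega)]
      omega
  · intro a b c h1 h2
    rcases comp_mem_ed.1 h1 with h | ⟨b', h, rfl⟩ | ⟨a', b', h, rfl, rfl⟩ <;>
    rcases comp_mem_ed.1 h2 with h' | ⟨c', h', rfl⟩ | ⟨a'', c', h', he, rfl⟩
    · exact hA.inj1 _ _ _ h h'
    · exact absurd h ((hs.up _ _ h').2.1 _)
    · have := hA.edb h; have := hB.edb h'; omega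
    · exact absurd h' ((hs.up _ _ h).2.1 _)
    · rw [hs.inj1 _ _ _ h h']
    · have := hs.up _ _ h; have := hB.edb h'; omega
    · have := hA.edb h'; have := hB.edb h; omega
    · have := hs.up _ _ h'; have := hB.edb h; omega
    · obtain rfl : a'' = a' := by omega
      rw [hB.inj1 _ _ _ h h']
  · intro a b c h1 h2
    rcases comp_mem_ed.1 h1 with h | ⟨b', h, rfl⟩ | ⟨a', b', h, rfl, rfl⟩ <;>
    rcases comp_mem_ed.1 h2 with h' | ⟨c', h', he⟩ | ⟨a'', c', h', rfl, he⟩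
    · exact hA.inj2 _ _ _ h h'
    · have := hA.edb h; have := hs.dn _ _ h'; omega
    · have := hA.edb h; have := hB.edb h'; omega
    · have := hA.edb h'; have := hs.dn _ _ h; omega
    · obtain rfl : c' = b' := by omega
      rw [hs.inj2 _ _ _ h h']
    · obtain rfl : c' = b' := by omega
      exact absurd h' ((hs.dn _ _ h).2.1 _)
    · have := hA.edb h'; have := hB.edb h; omega
    · obtain rfl : c' = b' := by omega
      exact absurd h ((hs.dn _ _ h').2.1 _)
    · obtain rfl : c' = b' := by omega
      rw [hB.inj2 _ _ _ h h']

theorem comp_cut {A B : BD} (hA : A.V) (hB : B.V) {s : Finset (ℕ × ℕ)} (hs : M A B s) :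
    Cut (comp A B s) A B := by
  refine ⟨rfl, ?_, ?_, ?_, ?_, ?_, ?_⟩
  · intro k hk
    rw [comp_mem_up]
    refine ⟨?_, Or.inl⟩
    rintro (h | ⟨j, h, rfl⟩)
    · exact h
    · have := hB.up _ h; omega
  · intro k hk
    rw [comp_mem_up]
    refine ⟨?_, fun h => Or.inr ⟨k, h, rfl⟩⟩
    rintro (h | ⟨j, h, hj⟩)
    · have := hA.up _ h; omega
    · obtain rfl : j = k := by omega
      exact h
  · intro k hk
    rw [comp_mem_dn]
    refine ⟨?_, Or.inl⟩
    rintro (h | ⟨j, h, rfl⟩)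
    · exact h
    · have := hB.dn _ h; omega
  · intro k hk
    rw [comp_mem_dn]
    refine ⟨?_, fun h => Or.inr ⟨k, h, rfl⟩⟩
    rintro (h | ⟨j, h, hj⟩)
    · have := hA.dn _ h; omega
    · obtain rfl : j = k := by omega
      exact h
  · intro a b ha hb
    rw [comp_mem_ed]
    refine ⟨?_, Or.inl⟩
    rintro (h | ⟨b', h, rfl⟩ | ⟨a', b', h, rfl, rfl⟩)
    · exact h
    · have := hs.dn _ _ h; omega
    · have := hB.edb h; omega
  · intro a b ha hb
    rw [comp_mem_ed]
    refine ⟨?_, fun h => Or.inr (Or.inr ⟨a, b, h, rfl, rfl⟩)⟩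
    rintro (h | ⟨b', h, hj⟩ | ⟨a', b', h, hj, hj'⟩)
    · have := hA.edb h; omega
    · have := hs.up _ _ h; omega
    · obtain rfl : a' = a := by omega
      obtain rfl : b' = b := by omega
      exact h

theorem comp_inj {A B : BD} (hA : A.V) (hB : B.V) {s t : Finset (ℕ × ℕ)} (hs : M A B s)
    (ht : M A B t) (h : comp A B s = comp A B t) : s = t := by
  have aux : ∀ {s t : Finset (ℕ × ℕ)}, M A B s → M A B t → comp A B s = comp A B t → s ⊆ t := by
    rintro s t hs ht h ⟨a, b⟩ hab
    have h1 : (a, b + A.lam.sum) ∈ (comp A B s).ed := comp_mem_ed.2 (Or.inr (Or.inl ⟨b, hab, rfl⟩))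
    have h2 := hs.up _ _ hab
    have h3 := hs.dn _ _ hab
    rw [h, comp_mem_ed] at h1
    rcases h1 with h | ⟨b', h, hj⟩ | ⟨a', b', h, hj, hj'⟩
    · have := hA.edb h; omega
    · obtain rfl : b' = b := by omega
      exact h
    · have := hB.edb h; omega
  exact Finset.Subset.antisymm (aux hs ht h) (aux ht hs h.symm)

/-- crossing edges -/
def X (G A B : BD) : Finset (ℕ × ℕ) :=
  (Finset.Icc 1 A.lam.sum ×ˢ Finset.Icc 1 B.lam.sum).filter (fun p => (p.1, p.2 + A.lam.sum) ∈ G.ed)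

theorem mem_X {G A B : BD} {a b : ℕ} : (a, b) ∈ X G A B ↔
    (a, b + A.lam.sum) ∈ G.ed ∧ 1 ≤ a ∧ a ≤ A.lam.sum ∧ 1 ≤ b ∧ b ≤ B.lam.sum := by
  simp only [X, Finset.mem_filter, Finset.mem_Icc, Finset.mem_product]
  tauto

theorem X_M {G A B : BD} (hG : G.V) (hA : A.V) (hB : B.V) (h : Cut G A B) : M A B (X G A B) := by
  refine ⟨?_, ?_, ?_, ?_⟩
  · intro a b hab
    obtain ⟨h1, h2, h3, h4, h5⟩ := mem_X.1 hab
    refine ⟨(h.upl _ h3).1 (hG.ed _ _ h1).1, fun c hc => ?_, h2, h3⟩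
    have h6 := hA.edb hc
    have := hG.inj1 _ _ _ h1 ((h.edl _ _ h3 h6.2.2).2 hc)
    omega
  · intro a b hab
    obtain ⟨h1, h2, h3, h4, h5⟩ := mem_X.1 hab
    refine ⟨(h.dnr _ h4).1 (hG.ed _ _ h1).2.1, fun c hc => ?_, h4, h5⟩
    have h6 := hB.edb hc
    have := hG.inj2 _ _ _ h1 ((h.edr _ _ h6.1 h4).2 hc)
    omega
  · intro a b c h1 h2
    have := hG.inj1 _ _ _ (mem_X.1 h1).1 (mem_X.1 h2).1
    omega
  · intro a b c h1 h2
    exact hG.inj2 _ _ _ (mem_X.1 h1).1 (mem_X.1 h2).1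

theorem cut_comp {G A B : BD} (hG : G.V) (hA : A.V) (hB : B.V) (h : Cut G A B) :
    comp A B (X G A B) = G := by
  have hsum : G.lam.sum = A.lam.sum + B.lam.sum := by rw [h.lam, List.sum_append]
  have hc := comp_cut hA hB (X_M hG hA hB h)
  have hV := comp_valid hA hB (X_M hG hA hB h)
  apply bd_ext h.lam.symm
  · intro k
    rcases le_or_gt k A.lam.sum with hk | hk
    · rw [h.upl k hk, hc.upl k hk]
    · obtain ⟨j, rfl⟩ : ∃ j, k = j + A.lam.sum := ⟨k - A.lam.sum, by omega⟩
      rw [h.upr j (by omega), hc.upr j (by omega)]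
  · intro k
    rcases le_or_gt k A.lam.sum with hk | hk
    · rw [h.dnl k hk, hc.dnl k hk]
    · obtain ⟨j, rfl⟩ : ∃ j, k = j + A.lam.sum := ⟨k - A.lam.sum, by omega⟩
      rw [h.dnr j (by omega), hc.dnr j (by omega)]
  · intro a b
    rcases le_or_gt b A.lam.sum with hb | hb <;> rcases le_or_gt a A.lam.sum with ha | ha
    · rw [h.edl a b ha hb, hc.edl a b ha hb]
    · exact iff_of_false (fun h' => by have := hV.edb h'; omega)
        (fun h' => by have := hG.edb h'; omega)
    · obtain ⟨j, rfl⟩ : ∃ j, b = j + A.lam.sum := ⟨b - A.lam.sum, by omega⟩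
      rw [comp_mem_ed]
      constructor
      · rintro (h | ⟨b', h, hj⟩ | ⟨a', b', h, hj, hj'⟩)
        · have := hA.edb h; omega
        · rw [← hj]
          exact (mem_X.1 h).1
        · have := hB.edb h; omega
      · intro h'
        have := hG.edb h'
        exact Or.inr (Or.inl ⟨j, mem_X.2 ⟨h', by omega⟩, rfl⟩)
    · obtain ⟨j, rfl⟩ : ∃ j, b = j + A.lam.sum := ⟨b - A.lam.sum, by omega⟩
      obtain ⟨i, rfl⟩ : ∃ i, a = i + A.lam.sum := ⟨a - A.lam.sum, by omega⟩
      rw [h.edr i j (by omega) (by omega), hc.edr i j (by omega) (by omega)]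

theorem M_empty (A B : BD) : M A B ∅ := by
  refine ⟨?_, ?_, ?_, ?_⟩ <;> simp

/-- number of edges of a composition -/
theorem comp_card {A B : BD} (hA : A.V) (hB : B.V) {s : Finset (ℕ × ℕ)} (hs : M A B s) :
    (comp A B s).ed.card = A.ed.card + s.card + B.ed.card := by
  unfold comp
  simp only [omega]
  rw [Finset.card_union_of_disjoint, Finset.card_union_of_disjoint, Finset.card_image_of_injective,
    Finset.card_image_of_injective]
  · rintro ⟨a, b⟩ ⟨c, d⟩ h
    simpa using h
  · rintro ⟨a, b⟩ ⟨c, d⟩ h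
    simpa using h
  · rw [Finset.disjoint_left]
    rintro ⟨a, b⟩ h h'
    simp only [Finset.mem_image, Prod.exists, Prod.mk.injEq] at h'
    obtain ⟨c, d, h', rfl, rfl⟩ := h'
    have := hA.edb h; have := hs.dn _ _ h'; omega
  · rw [Finset.disjoint_left]
    rintro ⟨a, b⟩ h h'
    simp only [Finset.mem_image, Finset.mem_union, Prod.exists, Prod.mk.injEq] at h h'
    obtain ⟨c, d, h', rfl, rfl⟩ := h'
    have := hB.edb h'
    rcases h with h | ⟨c', d', h, h1, h2⟩
    · have := hA.edb h; omega
    · have := hs.up _ _ h; omega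

theorem V.card_le {G : BD} (hG : G.V) : G.ed.card ≤ G.lam.sum := by
  have : G.ed.card ≤ (Finset.Icc 1 G.lam.sum).card := by
    apply Finset.card_le_card_of_injOn Prod.fst
    · rintro ⟨a, b⟩ h
      have := hG.edb h
      simp
      omega
    · rintro ⟨a, b⟩ h ⟨c, d⟩ h' (rfl : a = c)
      rw [hG.inj1 _ _ _ h h']
  simpa using this

theorem juxt_eq_iff {G A B : BD} (hG : G.V) (hA : A.V) (hB : B.V) :
    G = juxt A B ↔ Cut G A B ∧ ∀ a b, (a, b) ∈ G.ed → a ≤ A.lam.sum → b ≤ A.lam.sum := by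
  constructor
  · rintro rfl
    refine ⟨comp_cut hA hB (M_empty A B), ?_⟩
    intro a b h ha
    rcases comp_mem_ed.1 h with h | ⟨b', h, hj⟩ | ⟨a', b', h, hj, hj'⟩
    · have := hA.edb h; omega
    · simp at h
    · have := hB.edb h; omega
  · rintro ⟨h, h'⟩
    have hX : X G A B = ∅ := by
      rw [Finset.eq_empty_iff_forall_notMem]
      rintro ⟨a, b⟩ hab
      have h1 := mem_X.1 hab
      have := h' _ _ h1.1 h1.2.2.1
      omega
    rw [← cut_comp hG hA hB h, hX, juxt]

theorem juxt_assoc (A B C : BD) : juxt (juxt A B) C = juxt A (juxt B C) := by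
  apply bd_ext
  · simp [juxt, comp]
  · intro k
    simp only [juxt, comp_mem_up]
    simp only [comp, List.sum_append, or_assoc, or_and_right, exists_or]
    refine or_congr_right (or_congr_right ⟨?_, ?_⟩)
    · rintro ⟨j, h, rfl⟩
      exact ⟨j + B.lam.sum, ⟨j, h, rfl⟩, by omega⟩
    · rintro ⟨_, ⟨j, h, rfl⟩, rfl⟩
      exact ⟨j, h, by omega⟩
  · intro k
    simp only [juxt, comp_mem_dn]
    simp only [comp, List.sum_append, or_assoc, or_and_right, exists_or]
    refine or_congr_right (or_congr_right ⟨?_, ?_⟩)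
    · rintro ⟨j, h, rfl⟩
      exact ⟨j + B.lam.sum, ⟨j, h, rfl⟩, by omega⟩
    · rintro ⟨_, ⟨j, h, rfl⟩, rfl⟩
      exact ⟨j, h, by omega⟩
  · intro a b
    simp only [juxt, comp_mem_ed]
    simp only [comp, List.sum_append, or_assoc, or_and_right, exists_or, Finset.notMem_empty,
      false_and, exists_false, false_or]
    refine or_congr_right (or_congr_right ⟨?_, ?_⟩)
    · rintro ⟨i, j, h, rfl, rfl⟩
      exact ⟨i + B.lam.sum, j + B.lam.sum, ⟨i, j, h, rfl, rfl⟩, by omega, by omega⟩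
    · rintro ⟨_, _, ⟨i, j, h, rfl, rfl⟩, rfl, rfl⟩
      exact ⟨i, j, h, by omega, by omega⟩

theorem juxt_eps (A : BD) : juxt A eps = A := by
  apply bd_ext <;> simp [juxt, comp, eps]

theorem eps_juxt (A : BD) : juxt eps A = A := by
  apply bd_ext <;> simp [juxt, comp, eps, omega]

theorem eq_eps {A : BD} (hA : A.V) (h : A.lam = []) : A = eps := by
  have hs : A.lam.sum = 0 := by rw [h]; rfl
  apply bd_ext h
  · intro k; refine iff_of_false (fun h' => ?_) (by simp [eps])
    have := hA.up _ h'; omega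
  · intro k; refine iff_of_false (fun h' => ?_) (by simp [eps])
    have := hA.dn _ h'; omega
  · intro a b; refine iff_of_false (fun h' => ?_) (by simp [eps])
    have := hA.edb h'; omega

theorem juxt_valid {A B : BD} (hA : A.V) (hB : B.V) : (juxt A B).V := comp_valid hA hB (M_empty A B)

/-- shorter indivisible prefix is impossible -/
theorem indiv_aux {g h A B : BD} (hg : g.V) (hh : h.V) (hA : A.V) (hB : B.V) (hi : h.Indiv)
    (hg0 : g.lam ≠ []) (he : juxt g A = juxt h B) (hlt : g.lam.length < h.lam.length) : False := by
  have hG := juxt_valid hg hA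
  obtain ⟨c1, n1⟩ := (juxt_eq_iff hG hg hA).1 rfl
  obtain ⟨c2, n2⟩ := (juxt_eq_iff hG hh hB).1 he
  obtain ⟨l, hl⟩ : ∃ l, h.lam = g.lam ++ l := by
    have := c1.lam.symm.trans c2.lam
    rcases List.append_eq_append_iff.1 this with ⟨l, h1, h2⟩ | ⟨l, h1, h2⟩
    · exact ⟨l, h1⟩
    · rw [h1] at hlt; simp at hlt
  have hs : h.lam.sum = g.lam.sum + l.sum := by rw [hl, List.sum_append]
  have hcut := Cut_LR hh hl
  have hLV := L_valid hh hl
  have hRV := R_valid hh hl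
  have hLg : L h g.lam = g := by
    apply bd_ext (show (L h g.lam).lam = g.lam from rfl)
    · intro k
      simp only [L, Finset.mem_filter]
      have := c1.upl k; have := c2.upl k; have := hg.up k
      constructor <;> intro hh <;> grind
    · intro k
      simp only [L, Finset.mem_filter]
      have := c1.dnl k; have := c2.dnl k; have := hg.dn k
      constructor <;> intro hh <;> grind
    · intro a b
      simp only [L, Finset.mem_filter]
      have := c1.edl a b; have := c2.edl a b; have := @V.edb _ hg a b
      constructor <;> intro hh <;> grind
  rw [hLg] at hcut
  have hj : h = juxt g (R h g.lam l) := by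
    rw [juxt_eq_iff hh hg hRV]
    refine ⟨hcut, fun a b hab ha => n1 a b ?_ ha⟩
    have := hh.edb hab
    exact (c2.edl a b (by omega) (by omega)).2 hab
  rcases hi _ _ ((valid_iff _).2 hg) ((valid_iff _).2 hRV) hj with h1 | h1
  · rw [h1] at hlt; omega
  · have : l = h.lam := by rw [← h1]; rfl
    rw [← this] at hl
    exact hg0 (by simpa using hl)

theorem juxt_cancel {g h A B : BD} (hg : g.V) (hh : h.V) (hA : A.V) (hB : B.V) (hig : g.Indiv)
    (hih : h.Indiv) (hg0 : g.lam ≠ []) (hh0 : h.lam ≠ []) (he : juxt g A = juxt h B) :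
    g = h ∧ A = B := by
  rcases lt_trichotomy g.lam.length h.lam.length with hlt | hlt | hlt
  · exact (indiv_aux hg hh hA hB hih hg0 he hlt).elim
  · have c1 := ((juxt_eq_iff (juxt_valid hg hA) hg hA).1 rfl).1
    have c2 := ((juxt_eq_iff (juxt_valid hg hA) hh hB).1 he).1
    refine c1.unique c2 hg hA hh hB ?_
    exact (List.append_inj (c1.lam.symm.trans c2.lam) hlt).1
  · exact (indiv_aux hh hg hB hA hig hh0 he.symm hlt).elim

end BD

section final
open BD

theorem BDiagram.hV (A : BDiagram) : A.1.V := (valid_iff _).1 A.2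

open scoped Classical in
theorem mkB_apply (H : BD) (G : BDiagram) : mkB H G = if H = G.1 then 1 else 0 := by
  unfold mkB
  by_cases h : H.Valid
  · rw [dif_pos h, Finsupp.single_apply]
    simp [Subtype.ext_iff]
  · rw [dif_neg h, if_neg]
    · rfl
    · rintro rfl; exact h G.2

open scoped Classical in
theorem mulfun_apply (A B G : BDiagram) :
    mulfun A B G = if Cut G.1 A.1 B.1 then 1 else 0 := by
  unfold mulfun
  rw [Finsupp.finsetSum_apply]
  simp only [mkB_apply]
  by_cases h : Cut G.1 A.1 B.1
  · rw [if_pos h, Finset.sum_eq_single (X G.1 A.1 B.1)]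
    · rw [if_pos (cut_comp G.hV A.hV B.hV h)]
    · intro s hs hne
      rw [if_neg]
      intro he
      rw [matching_iff A.hV B.hV] at hs
      exact hne (comp_inj A.hV B.hV hs (X_M G.hV A.hV B.hV h)
        (he.trans (cut_comp G.hV A.hV B.hV h).symm))
    · intro hn
      exact absurd ((matching_iff A.hV B.hV).2 (X_M G.hV A.hV B.hV h)) hn
  · rw [if_neg h]
    apply Finset.sum_eq_zero
    intro s hs
    rw [if_neg]
    intro he
    rw [matching_iff A.hV B.hV] at hs
    exact h (he ▸ comp_cut A.hV B.hV hs)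

theorem liftB_apply {V : Type*} [AddCommMonoid V] [Module ℂ V] (f : BDiagram → V) (x : BSpace) :
    liftB f x = ∑ A ∈ x.support, x A • f A := by
  simp [liftB, Finsupp.sum]

theorem liftB_single {V : Type*} [AddCommMonoid V] [Module ℂ V] (f : BDiagram → V) (A : BDiagram) :
    liftB f (Finsupp.single A 1) = f A := by
  simp [liftB]

theorem starB_single (A B : BDiagram) :
    starB (Finsupp.single A 1) (Finsupp.single B 1) = mulfun A B := by
  simp [starB, liftB_single]

open scoped Classical in
theorem starB_left (x : BSpace) (C G : BDiagram) :
    starB x (Finsupp.single C 1) G =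
      ∑ D ∈ x.support, x D * (if Cut G.1 D.1 C.1 then 1 else 0) := by
  rw [starB, liftB_apply, LinearMap.sum_apply, Finsupp.finsetSum_apply]
  simp only [LinearMap.smul_apply, liftB_single, Finsupp.smul_apply, mulfun_apply, smul_eq_mul]

open scoped Classical in
theorem starB_right (x : BSpace) (A G : BDiagram) :
    starB (Finsupp.single A 1) x G =
      ∑ D ∈ x.support, x D * (if Cut G.1 A.1 D.1 then 1 else 0) := by
  rw [starB, liftB_single, liftB_apply, Finsupp.finsetSum_apply]
  simp only [Finsupp.smul_apply, mulfun_apply, smul_eq_mul]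

theorem starB_assoc_single (A B C : BDiagram) :
    starB (starB (Finsupp.single A 1) (Finsupp.single B 1)) (Finsupp.single C 1) =
    starB (Finsupp.single A 1) (starB (Finsupp.single B 1) (Finsupp.single C 1)) := by
  classical
  ext G
  rw [starB_single, starB_single, starB_left, starB_right]
  by_cases h : ∃ D : BDiagram, Cut D.1 A.1 B.1 ∧ Cut G.1 D.1 C.1
  · obtain ⟨D, h1, h2⟩ := h
    obtain ⟨h3, h4⟩ := cut_assoc G.hV B.hV h1 h2
    have hl : G.1.lam = A.1.lam ++ (B.1.lam ++ C.1.lam) := by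
      rw [h2.lam, h1.lam, List.append_assoc]
    let E : BDiagram := ⟨R G.1 A.1.lam (B.1.lam ++ C.1.lam), (valid_iff _).2 (R_valid G.hV hl)⟩
    rw [Finset.sum_eq_single D, Finset.sum_eq_single E]
    · rw [mulfun_apply, mulfun_apply, if_pos h1, if_pos h2, if_pos h3, if_pos h4]
    · intro E' _ hne
      rw [if_neg, mul_zero]
      intro hc
      exact hne (Subtype.ext (hc.unique h3 A.hV E'.hV A.hV E.hV rfl).2)
    · intro hE
      rw [Finsupp.notMem_support_iff.1 hE, zero_mul]
    · intro D' hD' hne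
      rw [Finsupp.mem_support_iff, mulfun_apply] at hD'
      rw [if_neg, mul_zero]
      intro hc
      have hD'' : Cut D'.1 A.1 B.1 := by
        by_contra hcc
        rw [if_neg hcc] at hD'
        exact hD' rfl
      exact hne (Subtype.ext (hc.unique h2 D'.hV C.hV D.hV C.hV (hD''.lam.trans h1.lam.symm)).1)
    · intro hE
      rw [Finsupp.notMem_support_iff.1 hE, zero_mul]
  · rw [Finset.sum_eq_zero, Finset.sum_eq_zero]
    · intro E _
      rw [mulfun_apply]
      by_cases h1 : Cut G.1 A.1 E.1
      · by_cases h2 : Cut E.1 B.1 C.1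
        · exfalso
          obtain ⟨h3, h4⟩ := cut_assoc' G.hV B.hV h1 h2
          have hl : G.1.lam = (A.1.lam ++ B.1.lam) ++ C.1.lam := by
            rw [h1.lam, h2.lam, List.append_assoc]
          exact h ⟨⟨_, (valid_iff _).2 (L_valid G.hV hl)⟩, h4, h3⟩
        · rw [if_neg h2, zero_mul]
      · rw [if_neg h1, mul_zero]
    · intro D _
      rw [mulfun_apply]
      by_cases h1 : Cut D.1 A.1 B.1
      · by_cases h2 : Cut G.1 D.1 C.1
        · exact absurd ⟨D, h1, h2⟩ h
        · rw [if_neg h2, mul_zero]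
      · rw [if_neg h1, zero_mul]

theorem single_c (A : BDiagram) (c : ℂ) :
    (Finsupp.single A c : BSpace) = c • Finsupp.single A 1 := by simp

theorem starB_assoc (x y z : BSpace) : starB (starB x y) z = starB x (starB y z) := by
  induction x using Finsupp.induction_linear with
  | zero => simp
  | add f g hf hg => simp only [map_add, LinearMap.add_apply, hf, hg]
  | single A a =>
    rw [single_c A a]
    simp only [map_smul, LinearMap.smul_apply]
    congr 1
    induction y using Finsupp.induction_linear with
    | zero => simp
    | add f g hf hg => simp only [map_add, LinearMap.add_apply, hf, hg]
    | single B b =>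
      rw [single_c B b]
      simp only [map_smul, LinearMap.smul_apply]
      congr 1
      induction z using Finsupp.induction_linear with
      | zero => simp
      | add f g hf hg => simp only [map_add, hf, hg]
      | single C c =>
        rw [single_c C c]
        simp only [map_smul]
        rw [starB_assoc_single]

theorem cut_eps_iff (G B : BDiagram) : Cut G.1 BD.eps B.1 ↔ G = B := by
  have he : BD.eps.V := (valid_iff _).1 eps_valid
  have key : ∀ H : BDiagram, Cut H.1 BD.eps H.1 := fun H =>
    ((juxt_eq_iff H.hV he H.hV).1 (eps_juxt _).symm).1
  constructor
  · intro h
    exact Subtype.ext ((key G).unique h he G.hV he B.hV rfl).2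
  · rintro rfl
    exact key G

theorem unitB_starB (x : BSpace) : starB unitB x = x := by
  classical
  ext G
  rw [unitB, starB_right]
  simp only [cut_eps_iff]
  simp [eq_comm]

theorem wordProdB_nil : wordProdB [] = unitB := rfl

theorem wordProdB_cons (g : GSet) (w : List GSet) :
    wordProdB (g :: w) = starB (Finsupp.single g.1 1) (wordProdB w) := rfl

theorem wordProdB_append (u w : List GSet) :
    wordProdB (u ++ w) = starB (wordProdB u) (wordProdB w) := by
  induction u with
  | nil => rw [wordProdB_nil, unitB_starB]; rfl
  | cons g u ih => rw [List.cons_append, wordProdB_cons, wordProdB_cons, ih, starB_assoc]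

theorem PsiB_single (w : List GSet) : PsiB (Finsupp.single w 1) = wordProdB w := by
  simp [PsiB]

def jx (A B : BDiagram) : BDiagram := ⟨juxt A.1 B.1, (valid_iff _).2 (juxt_valid A.hV B.hV)⟩

def J : List GSet → BDiagram
  | [] => ⟨BD.eps, eps_valid⟩
  | g :: w => jx g.1 (J w)

theorem J_append (u w : List GSet) : J (u ++ w) = jx (J u) (J w) := by
  induction u with
  | nil => exact Subtype.ext (eps_juxt _).symm
  | cons g u ih =>
    rw [List.cons_append, J, J, ih]
    exact Subtype.ext (juxt_assoc _ _ _).symm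

theorem GSet.lam_ne (g : GSet) : g.1.1.lam ≠ [] := fun h => g.2.1 (eq_eps g.1.hV h)

theorem J_inj : Function.Injective J := by
  intro u
  induction u with
  | nil =>
    intro w h
    cases w with
    | nil => rfl
    | cons g w =>
      exfalso
      have := congrArg (fun A : BDiagram => A.1.lam) h
      simp [J, jx, juxt, comp, BD.eps, g.lam_ne] at this
  | cons g u ih =>
    intro w h
    cases w with
    | nil =>
      exfalso
      have := congrArg (fun A : BDiagram => A.1.lam) h
      simp [J, jx, juxt, comp, BD.eps, g.lam_ne] at this
    | cons g' w =>
      have h' : juxt g.1.1 (J u).1 = juxt g'.1.1 (J w).1 := congrArg Subtype.val h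
      obtain ⟨h1, h2⟩ := juxt_cancel g.1.hV g'.1.hV (J u).hV (J w).hV g.2.2 g'.2.2
        g.lam_ne g'.lam_ne h'
      rw [ih (Subtype.ext h2), Subtype.ext (Subtype.ext h1)]

theorem J_surj_aux (n : ℕ) : ∀ G : BDiagram, G.1.lam.length = n → ∃ w, J w = G := by
  induction n using Nat.strong_induction_on with
  | _ n ih =>
    intro G hn
    by_cases h0 : G.1 = BD.eps
    · exact ⟨[], Subtype.ext h0.symm⟩
    by_cases hi : G.1.Indiv
    · exact ⟨[⟨G, h0, hi⟩], Subtype.ext (juxt_eps _)⟩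
    · unfold BD.Indiv at hi
      push Not at hi
      obtain ⟨A, B, hA, hB, he, h1, h2⟩ := hi
      have hl : G.1.lam = A.lam ++ B.lam := by rw [he]; rfl
      have hA0 : A.lam ≠ [] := fun h => h2 (by
        rw [he, eq_eps ((valid_iff _).1 hA) h, eps_juxt])
      have hB0 : B.lam ≠ [] := fun h => h1 (by
        rw [he, eq_eps ((valid_iff _).1 hB) h, juxt_eps])
      have hA1 := List.length_pos_of_ne_nil hA0
      have hB1 := List.length_pos_of_ne_nil hB0
      rw [hl, List.length_append] at hn
      obtain ⟨u, hu⟩ := ih A.lam.length (by omega) ⟨A, hA⟩ rfl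
      obtain ⟨w, hw⟩ := ih B.lam.length (by omega) ⟨B, hB⟩ rfl
      refine ⟨u ++ w, ?_⟩
      rw [J_append, hu, hw]
      exact Subtype.ext he.symm

theorem cut_card {G A B : BDiagram} (h : Cut G.1 A.1 B.1) :
    G = jx A B ∨ A.1.ed.card + B.1.ed.card < G.1.ed.card := by
  have h1 := cut_comp G.hV A.hV B.hV h
  have h2 := comp_card A.hV B.hV (X_M G.hV A.hV B.hV h)
  rw [h1] at h2
  by_cases hX : X G.1 A.1 B.1 = ∅
  · left
    rw [hX] at h1
    exact Subtype.ext h1.symm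
  · right
    have := Finset.card_pos.2 (Finset.nonempty_iff_ne_empty.2 hX)
    omega

theorem jx_cut (A B : BDiagram) : Cut (jx A B).1 A.1 B.1 := comp_cut A.hV B.hV (M_empty _ _)

theorem jx_card (A B : BDiagram) : (jx A B).1.ed.card = A.1.ed.card + B.1.ed.card := by
  have := comp_card A.hV B.hV (M_empty A.1 B.1)
  rw [Finset.card_empty, add_zero] at this
  exact this

theorem word_tri (w : List GSet) : wordProdB w (J w) = 1 ∧
    ∀ G, wordProdB w G ≠ 0 → G.1.lam = (J w).1.lam ∧
      (G = J w ∨ (J w).1.ed.card < G.1.ed.card) := by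
  classical
  induction w with
  | nil =>
    rw [wordProdB_nil]
    refine ⟨by simp [unitB, J], ?_⟩
    intro G hG
    have : G = J [] := by
      by_contra h
      exact hG (Finsupp.single_eq_of_ne h)
    subst this
    exact ⟨rfl, Or.inl rfl⟩
  | cons g w ih =>
    obtain ⟨ih1, ih2⟩ := ih
    rw [wordProdB_cons]
    constructor
    · rw [starB_right, Finset.sum_eq_single (J w)]
      · rw [ih1, J, if_pos (jx_cut _ _), one_mul]
      · intro D _ hne
        rw [if_neg, mul_zero]
        intro hc
        exact hne (Subtype.ext (hc.unique (jx_cut _ _) g.1.hV D.hV g.1.hV (J w).hV rfl).2)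
      · intro h
        rw [Finsupp.notMem_support_iff.1 h, zero_mul]
    · intro G hG
      rw [starB_right] at hG
      obtain ⟨D, hD, hD'⟩ := Finset.exists_ne_zero_of_sum_ne_zero hG
      rw [Finsupp.mem_support_iff] at hD
      have hc : Cut G.1 g.1.1 D.1 := by
        by_contra h
        rw [if_neg h, mul_zero] at hD'
        exact hD' rfl
      obtain ⟨h1, h2⟩ := ih2 D hD
      refine ⟨?_, ?_⟩
      · rw [hc.lam, h1]; rfl
      · rw [J, jx_card]
        rcases h2 with rfl | h2
        · exact cut_card hc
        · right
          rcases cut_card hc with rfl | h3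
          · rw [jx_card]; omega
          · omega

theorem PsiB_apply (x : List GSet →₀ ℂ) : PsiB x = ∑ w ∈ x.support, x w • wordProdB w := by
  simp [PsiB, Finsupp.sum]

theorem PsiB_inj : Function.Injective PsiB := by
  rw [injective_iff_map_eq_zero]
  intro x hx
  by_contra hne
  obtain ⟨w, hw, hmin⟩ := Finset.exists_min_image x.support (fun w => (J w).1.ed.card)
    (Finsupp.support_nonempty_iff.2 hne)
  have h := DFunLike.congr_fun hx (J w)
  rw [PsiB_apply, Finsupp.finsetSum_apply, Finset.sum_eq_single w] at h
  · rw [Finsupp.smul_apply, (word_tri w).1] at h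
    simp only [smul_eq_mul, mul_one, Finsupp.coe_zero, Pi.zero_apply] at h
    exact (Finsupp.mem_support_iff.1 hw) h
  · intro u hu hne
    rw [Finsupp.smul_apply, smul_eq_mul]
    by_contra hc
    rcases ((word_tri u).2 (J w) (right_ne_zero_of_mul hc)).2 with h1 | h1
    · exact hne (J_inj h1).symm
    · have := hmin u hu
      omega
  · intro h; exact absurd hw h

theorem PsiB_surj_aux (n : ℕ) : ∀ G : BDiagram, G.1.lam.sum - G.1.ed.card = n →
    (Finsupp.single G 1 : BSpace) ∈ LinearMap.range PsiB := by
  induction n using Nat.strong_induction_on with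
  | _ n ih =>
    intro G hn
    obtain ⟨w, rfl⟩ := J_surj_aux _ G rfl
    obtain ⟨h1, h2⟩ := word_tri w
    have hdec : (Finsupp.single (J w) 1 : BSpace) =
        wordProdB w - ∑ G ∈ (wordProdB w).support.erase (J w),
          (wordProdB w G) • (Finsupp.single G 1 : BSpace) := by
      have hm : J w ∈ (wordProdB w).support := by
        rw [Finsupp.mem_support_iff, h1]; exact one_ne_zero
      have h3 : (wordProdB w) = ∑ G ∈ (wordProdB w).support,
          (wordProdB w G) • (Finsupp.single G 1 : BSpace) := by
        conv_lhs => rw [← Finsupp.sum_single (wordProdB w)]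
        simp [Finsupp.sum]
      rw [← Finset.add_sum_erase _ _ hm, h1, one_smul] at h3
      rw [eq_sub_iff_add_eq]
      exact h3.symm
    rw [hdec]
    refine Submodule.sub_mem _ ⟨_, PsiB_single w⟩ (Submodule.sum_mem _ fun G hG => ?_)
    refine Submodule.smul_mem _ _ ?_
    rw [Finset.mem_erase, Finsupp.mem_support_iff] at hG
    obtain ⟨h3, h4⟩ := h2 G hG.2
    have h5 := h4.resolve_left hG.1
    have h6 := G.hV.card_le
    refine ih _ ?_ G rfl
    rw [h3] at h6 ⊢
    omega

theorem PsiB_surj : Function.Surjective PsiB := by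
  rw [← LinearMap.range_eq_top, eq_top_iff]
  intro x _
  rw [← Finsupp.sum_single x]
  refine Submodule.sum_mem _ fun G _ => ?_
  rw [single_c]
  exact Submodule.smul_mem _ _ (PsiB_surj_aux _ G rfl)

end final

/-- `(ℬ, ⋆)` is free on the nonempty indivisible B-diagrams: the unique
algebra morphism from the free associative algebra on 𝔾 to `(ℬ, ⋆)` sending each
generator to the corresponding basis element (namely, the linear map `PsiB`, which is
multiplicative and unital) is an isomorphism of algebras. -/
theorem bspace_free_on_indivisible :
    Function.Bijective PsiB ∧
    (∀ u v : List GSet,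
      PsiB (Finsupp.single (u ++ v) 1) =
        starB (PsiB (Finsupp.single u 1)) (PsiB (Finsupp.single v 1))) ∧
    PsiB (Finsupp.single [] 1) = unitB := by
  refine ⟨⟨PsiB_inj, PsiB_surj⟩, fun u v => ?_, ?_⟩
  · rw [PsiB_single, PsiB_single, PsiB_single, wordProdB_append]
  · rw [PsiB_single, wordProdB_nil]
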